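/- arXiv:1605.07873 — 3 statements merged into one kernel-verified Lean document; each statement's English description precedes it below -/
import Mathlib

section
/- Fix α ∈ (0,1). For n ≥ 2 and integers k with ⌈n/2⌉ ≤ k ≤ n−1, let q_n(k,n−k) = (1 + 1_{k≠n/2})·[Γ(k−α)Γ(n−k−α)/(Γ(n−α)Γ(1−α))]·[(α/2)·C(n,k) + (1−2α)·C(n−2,k−1)], the splitting probabilities of Ford's α-model. Then for every continuous f : [1/2,1] → ℝ, n^α·Σ_{k=⌈n/2⌉}^{n−1} q_n(k,n−k)·(1−k/n)·f(k/n) → ∫_{1/2}^{1} (1−x)·f(x)·(1/Γ(1−α))·[α·(x(1−x))^{−α−1} + (2−4α)·(x(1−x))^{−α}] dx as n → ∞. That is, (q_n^{Ford,α}) satisfies Hypothesis (H) with γ = α and ν = ν_{Ford,α}, the binary measure on 𝒮↓ supported on sequences (x,1−x,0,0,…) with the displayed density in x ∈ [1/2,1]. -/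
open MeasureTheory Filter Real Set

/-- The splitting probabilities of Ford's α-model:
`q_n(k,n−k) = (1 + 1_{k≠n/2})·[Γ(k−α)Γ(n−k−α)/(Γ(n−α)Γ(1−α))]·[(α/2)·C(n,k) + (1−2α)·C(n−2,k−1)]`. -/
noncomputable def fordQ (α : ℝ) (n k : ℕ) : ℝ :=
  (if 2 * k = n then (1 : ℝ) else 2) *
    (Real.Gamma ((k : ℝ) - α) * Real.Gamma ((n : ℝ) - (k : ℝ) - α) /
      (Real.Gamma ((n : ℝ) - α) * Real.Gamma (1 - α))) *
    ((α / 2) * (n.choose k : ℝ) + (1 - 2 * α) * ((n - 2).choose (k - 1) : ℝ))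

/-- Normalised Gamma ratio. -/
noncomputable def fordB (α : ℝ) (m : ℕ) : ℝ :=
  Real.Gamma ((m : ℝ) - α) * (m : ℝ) ^ (1 + α) / (m.factorial : ℝ)

lemma ford_prod (α : ℝ) (hα0 : 0 < α) (hα1 : α < 1) (n : ℕ) :
    (∏ j ∈ Finset.range (n + 1), (-α + (j : ℝ))) * Real.Gamma (-α) = Real.Gamma (n + 1 - α) := by
  induction n with
  | zero =>
    have := Real.Gamma_add_one (s := -α) (by linarith)
    simp
    rw [← sub_eq_neg_add] at this
    linarith
  | succ n ih =>
    rw [Finset.prod_range_succ, mul_right_comm, ih]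
    have h : ((n : ℝ) + 1 - α) ≠ 0 := by
      have : (0:ℝ) ≤ n := n.cast_nonneg
      linarith
    have := Real.Gamma_add_one h
    push_cast
    rw [show (n : ℝ) + 1 + 1 - α = n + 1 - α + 1 by ring, this]
    ring

lemma fordB_tendsto (α : ℝ) (hα0 : 0 < α) (hα1 : α < 1) :
    Tendsto (fordB α) atTop (nhds 1) := by
  have hG : Real.Gamma (-α) ≠ 0 := by
    apply Real.Gamma_ne_zero
    intro m hm
    rcases m with _ | m
    · simp at hm; linarith
    · push_cast at hm
      have : (0:ℝ) ≤ m := m.cast_nonneg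
      linarith
  have h1 := Real.GammaSeq_tendsto_Gamma (-α)
  have h2 : Tendsto (fun n : ℕ => (n : ℝ) / (n - α)) atTop (nhds 1) := by
    have := tendsto_natCast_div_add_atTop (𝕜 := ℝ) (-α)
    simpa [sub_eq_add_neg] using this
  have h3 := ((tendsto_const_nhds (x := Real.Gamma (-α))).div h1 hG).mul h2
  rw [div_self hG, one_mul] at h3
  refine h3.congr' ?_
  filter_upwards [eventually_ge_atTop 1] with n hn
  have hn0 : (1:ℝ) ≤ n := by exact_mod_cast hn
  have hn1 : (0:ℝ) < n := by linarith
  have hna : (n : ℝ) - α ≠ 0 := by linarith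
  have hp := ford_prod α hα0 hα1 n
  have hg : Real.Gamma ((n:ℝ) + 1 - α) = (n - α) * Real.Gamma (n - α) := by
    rw [← Real.Gamma_add_one hna]; congr 1; ring
  have hprod : (∏ j ∈ Finset.range (n + 1), (-α + (j : ℝ))) ≠ 0 := by
    rw [Finset.prod_ne_zero_iff]
    intro j _ hj
    rcases j with _ | j
    · simp at hj; linarith
    · push_cast at hj
      have : (0:ℝ) ≤ j := j.cast_nonneg
      linarith
  have hf : (n.factorial : ℝ) ≠ 0 := by exact_mod_cast n.factorial_ne_zero
  have hr : (n:ℝ) ^ (1 + α) = n * n ^ α := by rw [Real.rpow_add hn1, Real.rpow_one]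
  have hr2 : (n:ℝ) ^ (-α) = ((n:ℝ) ^ α)⁻¹ := Real.rpow_neg hn1.le α
  have hr3 : (n:ℝ) ^ α ≠ 0 := (Real.rpow_pos_of_pos hn1 α).ne'
  simp only [Pi.div_apply, fordB, Real.GammaSeq]
  rw [hr, hr2]
  rw [hg] at hp
  have : Real.Gamma (n - α) = (∏ j ∈ Finset.range (n + 1), (-α + (j : ℝ))) * Real.Gamma (-α) / (n - α) := by
    rw [hp]; field_simp
  rw [this]
  field_simp

lemma ford_choose (i j : ℕ) :
    ((i + j).choose i : ℝ) * ((i + j + 2 : ℝ) * (i + j + 1)) =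
      (((i + 1) + (j + 1)).choose (i + 1) : ℝ) * ((i + 1) * (j + 1)) := by
  have h1 := Nat.add_choose_mul_factorial_mul_factorial i j
  have h2 := Nat.add_choose_mul_factorial_mul_factorial (i+1) (j+1)
  rw [← Nat.choose_symm_add] at h1 h2
  rw [show i + 1 + (j + 1) = (i + j + 1) + 1 by ring] at *
  simp only [Nat.factorial_succ] at h2
  rw [← h1] at h2
  have hi := i.factorial_pos
  have hj := j.factorial_pos
  have : (i + j).choose i * ((i + j + 2) * (i + j + 1)) =
      ((i + j + 1 + 1).choose (i + 1)) * ((i + 1) * (j + 1)) := by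
    apply Nat.eq_of_mul_eq_mul_right (Nat.mul_pos hi hj)
    linarith
  exact_mod_cast this

/-- the rescaled summand as a function of `y = k / n`. -/
noncomputable def fordH (α : ℝ) (r y : ℝ) : ℝ :=
  (y * (1 - y)) ^ (-1 - α) * (1 - y) * (α / 2 + (1 - 2 * α) * (y * (1 - y)) * r)

lemma fordQ_eq (α : ℝ) (hα0 : 0 < α) (hα1 : α < 1) (n k : ℕ) (hk : 1 ≤ k) (hkn : k < n) :
    (n : ℝ) * ((n : ℝ) ^ α * (fordQ α n k * (1 - (k : ℝ) / n))) =
      (if 2 * k = n then (1 : ℝ) else 2) / Real.Gamma (1 - α) *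
        (fordB α k * fordB α (n - k) * (fordB α n)⁻¹) *
          fordH α ((n : ℝ) / (n - 1)) ((k : ℝ) / n) := by
  obtain ⟨i, rfl⟩ : ∃ i, k = i + 1 := ⟨k - 1, by omega⟩
  obtain ⟨j, rfl⟩ : ∃ j, n = (i + 1) + (j + 1) := ⟨n - i - 2, by omega⟩
  have e1 : i + 1 + (j + 1) - (i + 1) = j + 1 := by omega
  have e2 : i + 1 + (j + 1) - 2 = i + j := by omega
  have hc := ford_choose i j
  have hf := Nat.add_choose_mul_factorial_mul_factorial (i+1) (j+1)
  rw [← Nat.choose_symm_add] at hf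
  have hf' : (((i + 1) + (j + 1)).choose (i + 1) : ℝ) = ((i + 1 + (j + 1)).factorial : ℝ) /
      ((i+1).factorial * (j+1).factorial) := by
    rw [eq_div_iff (by positivity)]
    rw [← mul_assoc]; exact_mod_cast hf
  set C : ℝ := (((i + 1) + (j + 1)).choose (i + 1) : ℝ) with hC
  have hc' : ((i + j).choose i : ℝ) = C * ((i + 1) * (j + 1)) / ((i + j + 2 : ℝ) * (i + j + 1)) := by
    rw [eq_div_iff (by positivity)]; exact hc
  unfold fordQ fordB fordH
  rw [e1, e2, Nat.add_sub_cancel, hc', ← hC, hf']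
  push_cast
  have hi : (0:ℝ) ≤ i := i.cast_nonneg
  have hj : (0:ℝ) ≤ j := j.cast_nonneg
  generalize (i:ℝ) = a at *
  generalize (j:ℝ) = b at *
  have g1 : 0 < Real.Gamma (a + 1 - α) := Real.Gamma_pos_of_pos (by linarith)
  have g2 : 0 < Real.Gamma (b + 1 - α) := Real.Gamma_pos_of_pos (by linarith)
  have g3 : 0 < Real.Gamma (a + 1 + (b + 1) - α) := Real.Gamma_pos_of_pos (by linarith)
  have g4 : 0 < Real.Gamma (1 - α) := Real.Gamma_pos_of_pos (by linarith)
  have ha : 0 < a + 1 := by linarith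
  have hb : 0 < b + 1 := by linarith
  have hab : 0 < a + 1 + (b + 1) := by linarith
  have hab1 : 0 < a + b + 1 := by linarith
  have hab2 : 0 < a + b + 2 := by linarith
  have hy : 1 - (a + 1) / (a + 1 + (b + 1)) = (b + 1) / (a + 1 + (b + 1)) := by
    field_simp; ring
  have hs : a + 1 + (b + 1) - (a + 1) - α = b + 1 - α := by ring
  have hs' : a + 1 + (b + 1) - 1 = a + b + 1 := by ring
  have hs2 : a + b + 2 = a + 1 + (b + 1) := by ring
  have hR : ((a + 1) / (a + 1 + (b + 1)) * ((b + 1) / (a + 1 + (b + 1)))) ^ (-1 - α) =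
      ((a + 1 + (b + 1)) ^ (1 + α)) ^ 2 / ((a + 1) ^ (1 + α) * (b + 1) ^ (1 + α)) := by
    rw [show -1 - α = -(1 + α) by ring, Real.rpow_neg (by positivity),
      Real.mul_rpow (by positivity) (by positivity), Real.div_rpow (by positivity) (by positivity),
      Real.div_rpow (by positivity) (by positivity)]
    have := Real.rpow_pos_of_pos ha (1 + α)
    have := Real.rpow_pos_of_pos hb (1 + α)
    have := Real.rpow_pos_of_pos hab (1 + α)
    field_simp
  rw [hy, hR, hs, hs', hs2]
  have hN : (a + 1 + (b + 1)) ^ α = (a + 1 + (b + 1)) ^ (1 + α) / (a + 1 + (b + 1)) := by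
    rw [Real.rpow_add hab, Real.rpow_one]; field_simp
  rw [hN]
  have := Real.rpow_pos_of_pos ha (1 + α)
  have := Real.rpow_pos_of_pos hb (1 + α)
  have := Real.rpow_pos_of_pos hab (1 + α)
  generalize (a + 1) ^ (1 + α) = u at *
  generalize (b + 1) ^ (1 + α) = v at *
  generalize (a + 1 + (b + 1)) ^ (1 + α) = w at *
  generalize hN' : a + 1 + (b + 1) = N at *
  generalize (if 2 * (i+1) = (i + 1) + (j + 1) then (1 : ℝ) else 2) = c
  have f1 : ((i+1).factorial : ℝ) ≠ 0 := by positivity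
  have f2 : ((j+1).factorial : ℝ) ≠ 0 := by positivity
  have f3 : ((i+1+(j+1)).factorial : ℝ) ≠ 0 := by positivity
  generalize ((i+1).factorial : ℝ) = F1 at *
  generalize ((j+1).factorial : ℝ) = F2 at *
  generalize ((i+1+(j+1)).factorial : ℝ) = F3 at *
  generalize a + b + 1 = D at *
  generalize a + 1 = A at *
  generalize b + 1 = B at *
  field_simp


lemma ford_ceil (n k : ℕ) (hn : 1 ≤ n) (x : ℝ) (h1 : (k : ℝ) / n < x)
    (h2 : x ≤ ((k + 1 : ℕ) : ℝ) / n) : ⌈(n : ℝ) * x⌉₊ - 1 = k := by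
  have hn0 : (0:ℝ) < n := by exact_mod_cast hn
  rw [div_lt_iff₀ hn0] at h1
  rw [le_div_iff₀ hn0] at h2
  have : ⌈(n : ℝ) * x⌉₊ = k + 1 := by
    rw [Nat.ceil_eq_iff (by omega)]
    constructor
    · simpa [mul_comm] using h1
    · simpa [mul_comm] using h2
  omega

lemma ford_sum_eq (n : ℕ) (hn : 2 ≤ n) (g : ℕ → ℝ) :
    ∑ k ∈ Finset.Icc ((n + 1) / 2) (n - 1), g k =
      ∫ x in Set.Ioo (1/2 : ℝ) 1,
        (Set.Ioi ((((n + 1) / 2 : ℕ) : ℝ) / n)).indicator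
          (fun x => (n : ℝ) * g (⌈(n : ℝ) * x⌉₊ - 1)) x := by
  have hn0 : (0:ℝ) < n := by exact_mod_cast (by omega : 0 < n)
  set p := (n + 1) / 2 with hp
  have hpn : p ≤ n := by omega
  have hc1 : (1/2 : ℝ) ≤ (p : ℝ) / n := by
    rw [le_div_iff₀ hn0]
    have : (n : ℝ) ≤ 2 * p := by exact_mod_cast (by omega : n ≤ 2 * p)
    linarith
  have hc2 : (p : ℝ) / n ≤ 1 := by
    rw [div_le_one hn0]; exact_mod_cast hpn
  rw [← integral_Ioc_eq_integral_Ioo, setIntegral_indicator measurableSet_Ioi]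
  have hset : Set.Ioc (1/2 : ℝ) 1 ∩ Set.Ioi ((p : ℝ) / n) = Set.Ioc ((p : ℝ) / n) 1 := by
    ext x; simp only [Set.mem_inter_iff, Set.mem_Ioc, Set.mem_Ioi]
    constructor
    · rintro ⟨⟨_, h⟩, h'⟩; exact ⟨h', h⟩
    · rintro ⟨h, h'⟩; exact ⟨⟨by linarith, h'⟩, h⟩
  rw [hset, ← intervalIntegral.integral_of_le hc2]
  have hle : ∀ k : ℕ, (k : ℝ) / n ≤ ((k + 1 : ℕ) : ℝ) / n := fun k => by
    gcongr; simp
  have hcongr : ∀ k : ℕ, Set.EqOn (fun _ : ℝ => (n : ℝ) * g k)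
      (fun x : ℝ => (n : ℝ) * g (⌈(n : ℝ) * x⌉₊ - 1))
      (Set.uIoc ((k : ℝ) / n) (((k + 1 : ℕ) : ℝ) / n)) := by
    intro k x hx
    rw [Set.uIoc_of_le (hle k)] at hx
    simp only
    rw [ford_ceil n k (by omega) x hx.1 hx.2]
  have hadj := intervalIntegral.sum_integral_adjacent_intervals_Ico (μ := volume)
    (f := fun x : ℝ => (n : ℝ) * g (⌈(n : ℝ) * x⌉₊ - 1)) (a := fun k : ℕ => (k : ℝ) / n) hpn
    (fun k _ => (intervalIntegrable_const (c := (n : ℝ) * g k)).congr (hcongr k))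
  simp only [div_self hn0.ne'] at hadj
  rw [← hadj]
  have hI : Finset.Icc p (n - 1) = Finset.Ico p n := by
    ext k; simp only [Finset.mem_Icc, Finset.mem_Ico]; omega
  rw [hI]
  refine Finset.sum_congr rfl fun k _ => ?_
  rw [← intervalIntegral.integral_congr_ae (f := fun _ : ℝ => (n : ℝ) * g k)
    (Filter.Eventually.of_forall fun x hx => hcongr k hx)]
  rw [intervalIntegral.integral_const, smul_eq_mul]
  push_cast
  field_simp
  ring

lemma fordH_bound (α : ℝ) (hα0 : 0 < α) (hα1 : α < 1) (r x y : ℝ) (hr0 : 0 ≤ r) (hr : r ≤ 2)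
    (hy : 1/2 ≤ y) (hyx : y ≤ x) (hx : x < 1) :
    |fordH α r y| ≤ (1/2 : ℝ) ^ (-1 - α) * (1 - x) ^ (-α) * 3 := by
  have h1y : 0 < 1 - y := by linarith
  have h1x : 0 < 1 - x := by linarith
  have hy0 : 0 < y := by linarith
  have e : fordH α r y = (y ^ (-1 - α) * (1 - y) ^ (-α)) *
      (α / 2 + (1 - 2 * α) * (y * (1 - y)) * r) := by
    unfold fordH
    rw [Real.mul_rpow hy0.le h1y.le, show -α = (-1 - α) + 1 by ring, Real.rpow_add_one h1y.ne']
    ring_nf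
  rw [e, abs_mul, abs_of_nonneg (by positivity)]
  have b1 : y ^ (-1 - α) ≤ (1/2 : ℝ) ^ (-1 - α) :=
    Real.rpow_le_rpow_of_nonpos (by norm_num) hy (by linarith)
  have b2 : (1 - y) ^ (-α) ≤ (1 - x) ^ (-α) :=
    Real.rpow_le_rpow_of_nonpos h1x (by linarith) (by linarith)
  have b3 : |α / 2 + (1 - 2 * α) * (y * (1 - y)) * r| ≤ 3 := by
    have hz0 : 0 ≤ y * (1 - y) * r := by positivity
    have hz1 : y * (1 - y) ≤ 1 := by nlinarith
    have hz2 : y * (1 - y) * r ≤ 2 := by nlinarith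
    rw [mul_assoc, abs_le]
    constructor <;> nlinarith
  gcongr

lemma ford_bdd (u : ℕ → ℝ) (l : ℝ) (h : Tendsto u atTop (nhds l)) :
    ∃ B : ℝ, 0 ≤ B ∧ ∀ n, |u n| ≤ B := by
  obtain ⟨B, hB⟩ := h.abs.bddAbove_range
  have hB' : ∀ n, |u n| ≤ B := fun n => hB ⟨n, rfl⟩
  exact ⟨B, (abs_nonneg _).trans (hB' 0), hB'⟩

lemma ford_ratio : Tendsto (fun n : ℕ => (n : ℝ) / (n - 1)) atTop (nhds 1) := by
  have := tendsto_natCast_div_add_atTop (𝕜 := ℝ) (-1)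
  simpa [sub_eq_add_neg] using this

/-- Bounds on the index `k = ⌈n x⌉ - 1`. -/
lemma ford_idx (n : ℕ) (hn : 2 ≤ n) (x : ℝ) (hx0 : 0 < x) (hx : x < 1) :
    ((⌈(n : ℝ) * x⌉₊ - 1 : ℕ) : ℝ) / n ≤ x ∧ x - 1 / n ≤ ((⌈(n : ℝ) * x⌉₊ - 1 : ℕ) : ℝ) / n ∧
      ⌈(n : ℝ) * x⌉₊ - 1 < n := by
  have hn0 : (0:ℝ) < n := by exact_mod_cast (by omega : 0 < n)
  have hpos : 0 < (n : ℝ) * x := by positivity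
  have h1 : 1 ≤ ⌈(n : ℝ) * x⌉₊ := Nat.one_le_ceil_iff.mpr hpos
  have h2 := Nat.ceil_lt_add_one hpos.le
  have h3 := Nat.le_ceil ((n : ℝ) * x)
  have h4 : ⌈(n : ℝ) * x⌉₊ ≤ n := by
    rw [Nat.ceil_le]; nlinarith
  rw [Nat.cast_sub h1]
  push_cast
  refine ⟨?_, ?_, by omega⟩
  · rw [div_le_iff₀ hn0]; linarith
  · rw [le_div_iff₀ hn0, sub_mul]
    have : 1 / (n : ℝ) * n = 1 := by field_simp
    rw [this]; linarith

lemma ford_idx_half (n : ℕ) (hn : 2 ≤ n) (x : ℝ) (hx : (((n + 1) / 2 : ℕ) : ℝ) / n < x) :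
    (n + 1) / 2 ≤ ⌈(n : ℝ) * x⌉₊ - 1 := by
  have hn0 : (0:ℝ) < n := by exact_mod_cast (by omega : 0 < n)
  rw [div_lt_iff₀ hn0] at hx
  have : (n + 1) / 2 < ⌈(n : ℝ) * x⌉₊ := Nat.lt_ceil.mpr (by linarith)
  omega

/-- for `α ∈ (0,1)`, the splitting probabilities of Ford's α-model satisfy
Hypothesis (H) with `γ = α` and `ν = ν_{Ford,α}`: for every continuous `f : [1/2,1] → ℝ`,
`n^α · Σ_{k=⌈n/2⌉}^{n−1} q_n(k,n−k)(1−k/n) f(k/n)` converges to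
`∫_{1/2}^{1} (1−x) f(x) (1/Γ(1−α))[α(x(1−x))^{−α−1} + (2−4α)(x(1−x))^{−α}] dx`. -/
theorem stmt12 (α : ℝ) (hα0 : 0 < α) (hα1 : α < 1) :
    ∀ f : ℝ → ℝ, ContinuousOn f (Set.Icc (1/2 : ℝ) 1) →
      Tendsto (fun n : ℕ => (n : ℝ) ^ α *
          ∑ k ∈ Finset.Icc ((n + 1) / 2) (n - 1),
            fordQ α n k * (1 - (k : ℝ) / n) * f ((k : ℝ) / n))
        atTop
        (nhds (∫ x in Set.Icc (1/2 : ℝ) 1,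
          (1 - x) * f x * ((1 / Real.Gamma (1 - α)) *
            (α * (x * (1 - x)) ^ (-α - 1) + (2 - 4 * α) * (x * (1 - x)) ^ (-α))))) := by
  intro f hf
  have hΓ : 0 < Real.Gamma (1 - α) := Real.Gamma_pos_of_pos (by linarith)
  have hB := fordB_tendsto α hα0 hα1
  have hBi : Tendsto (fun n => (fordB α n)⁻¹) atTop (nhds 1) := by
    simpa using hB.inv₀ one_ne_zero
  obtain ⟨B, hB0, hBb⟩ := ford_bdd _ _ hB
  obtain ⟨D, hD0, hDb⟩ := ford_bdd _ _ hBi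
  obtain ⟨M, hM⟩ := isCompact_Icc.exists_bound_of_continuousOn hf
  have hM0 : 0 ≤ M := (norm_nonneg _).trans (hM 1 (by norm_num))
  rw [integral_Icc_eq_integral_Ioo]
  set g : ℕ → ℕ → ℝ := fun n k =>
    (n : ℝ) ^ α * (fordQ α n k * (1 - (k : ℝ) / n) * f ((k : ℝ) / n)) with hg
  set F : ℕ → ℝ → ℝ := fun n => (Set.Ioi ((((n + 1) / 2 : ℕ) : ℝ) / n)).indicator
          (fun x => (n : ℝ) * g n (⌈(n : ℝ) * x⌉₊ - 1)) with hF
  have hform : ∀ n k : ℕ, 1 ≤ k → k < n → (n : ℝ) * g n k =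
      (if 2 * k = n then (1 : ℝ) else 2) / Real.Gamma (1 - α) *
        (fordB α k * fordB α (n - k) * (fordB α n)⁻¹) *
          fordH α ((n : ℝ) / (n - 1)) ((k : ℝ) / n) * f ((k : ℝ) / n) := by
    intro n k hk hkn
    rw [← fordQ_eq α hα0 hα1 n k hk hkn]
    simp only [hg]; ring
  have key : Tendsto (fun n => ∫ x in Set.Ioo (1/2 : ℝ) 1, F n x) atTop
      (nhds (∫ x in Set.Ioo (1/2 : ℝ) 1,
          (1 - x) * f x * ((1 / Real.Gamma (1 - α)) *
            (α * (x * (1 - x)) ^ (-α - 1) + (2 - 4 * α) * (x * (1 - x)) ^ (-α))))) := by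
    refine tendsto_integral_filter_of_dominated_convergence
      (fun x => 2 / Real.Gamma (1 - α) * (B * B * D) *
        ((1/2 : ℝ) ^ (-1 - α) * (1 - x) ^ (-α) * 3) * M) ?_ ?_ ?_ ?_
    · refine Filter.Eventually.of_forall fun n => ?_
      refine (Measurable.indicator ?_ measurableSet_Ioi).aestronglyMeasurable
      have h1 : Measurable (fun k : ℕ => (n : ℝ) * g n (k - 1)) := measurable_from_top
      exact h1.comp (Nat.measurable_ceil.comp (measurable_const_mul (n : ℝ)))
    · filter_upwards [eventually_ge_atTop 2] with n hn
      refine (ae_restrict_iff' measurableSet_Ioo).mpr (Filter.Eventually.of_forall fun x hx => ?_)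
      have h1x : 0 < 1 - x := by linarith [hx.2]
      simp only [hF]
      by_cases hxc : (((n + 1) / 2 : ℕ) : ℝ) / n < x
      · rw [Set.indicator_of_mem (Set.mem_Ioi.mpr hxc)]
        have hk1 := ford_idx_half n hn x hxc
        obtain ⟨hk2, -, hk3⟩ := ford_idx n hn x (by linarith [hx.1]) hx.2
        generalize ⌈(n : ℝ) * x⌉₊ - 1 = k at *
        have hn0 : (2:ℝ) ≤ n := by exact_mod_cast hn
        have hy : (1/2 : ℝ) ≤ (k : ℝ) / n := by
          rw [le_div_iff₀ (by linarith)]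
          have : (n : ℝ) ≤ 2 * k := by exact_mod_cast (by omega : n ≤ 2 * k)
          linarith
        rw [hform n k (by omega) hk3, Real.norm_eq_abs]
        have hH := fordH_bound α hα0 hα1 ((n : ℝ) / (n - 1)) x ((k : ℝ) / n)
          (div_nonneg (by linarith) (by linarith))
          (by rw [div_le_iff₀ (by linarith)]; linarith) hy hk2 hx.2
        have hfM : |f ((k : ℝ) / n)| ≤ M := hM _ ⟨hy, by linarith [hx.2]⟩
        have hif : |(if 2 * k = n then (1 : ℝ) else 2)| ≤ 2 := by split_ifs <;> norm_num
        have b1 := hBb k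
        have b2 := hBb (n - k)
        have b3 := hDb n
        rw [abs_mul, abs_mul, abs_mul, abs_mul, abs_mul, abs_div, abs_of_pos hΓ]
        gcongr
      · rw [Set.indicator_of_notMem (by simpa using hxc)]
        simp only [norm_zero]
        positivity
    · have hint : IntegrableOn (fun x : ℝ => (1 - x) ^ (-α)) (Set.Ioo (1/2 : ℝ) 1) := by
        have h0 : IntervalIntegrable (fun x : ℝ => x ^ (-α)) volume (1/2) 0 :=
          intervalIntegral.intervalIntegrable_rpow' (by linarith)
        have h1 := h0.comp_sub_left 1
        norm_num at h1
        rw [intervalIntegrable_iff_integrableOn_Ioo_of_le (by norm_num)] at h1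
        exact h1
      have := (hint.const_mul ((2 / Real.Gamma (1 - α) * (B * B * D) *
        ((1/2 : ℝ) ^ (-1 - α) * 3) * M)))
      refine this.congr (Filter.Eventually.of_forall fun x => ?_)
      simp only; ring
    · refine (ae_restrict_iff' measurableSet_Ioo).mpr (Filter.Eventually.of_forall fun x hx => ?_)
      have h1x : 0 < 1 - x := by linarith [hx.2]
      have hx0 : 0 < x := by linarith [hx.1]
      set κ : ℕ → ℕ := fun n => ⌈(n : ℝ) * x⌉₊ - 1 with hκ
      have hinv : Tendsto (fun n : ℕ => 1 / (n : ℝ)) atTop (nhds 0) := tendsto_one_div_atTop_nhds_zero_nat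
      have hy : Tendsto (fun n : ℕ => (κ n : ℝ) / n) atTop (nhds x) := by
        refine tendsto_of_tendsto_of_tendsto_of_le_of_le' (g := fun n : ℕ => x - 1 / (n : ℝ))
          (by simpa using hinv.const_sub x) tendsto_const_nhds ?_ ?_
        · filter_upwards [eventually_ge_atTop 2] with n hn
          exact (ford_idx n hn x hx0 hx.2).2.1
        · filter_upwards [eventually_ge_atTop 2] with n hn
          exact (ford_idx n hn x hx0 hx.2).1
      have hcast : Tendsto (fun n : ℕ => (n : ℝ)) atTop atTop := tendsto_natCast_atTop_atTop
      have hk : Tendsto κ atTop atTop := by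
        rw [← tendsto_natCast_atTop_iff (R := ℝ)]
        refine (hy.pos_mul_atTop hx0 hcast).congr' ?_
        filter_upwards [eventually_ge_atTop 1] with n hn
        have : (n : ℝ) ≠ 0 := by positivity
        field_simp
      have hm : Tendsto (fun n => n - κ n) atTop atTop := by
        rw [← tendsto_natCast_atTop_iff (R := ℝ)]
        refine ((hy.const_sub 1).pos_mul_atTop h1x hcast).congr' ?_
        filter_upwards [eventually_ge_atTop 2] with n hn
        have : (n : ℝ) ≠ 0 := by positivity
        rw [Nat.cast_sub (ford_idx n hn x hx0 hx.2).2.2.le]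
        field_simp
        rfl
      have hfx : Tendsto (fun n : ℕ => f ((κ n : ℝ) / n)) atTop (nhds (f x)) :=
        (hf.continuousAt (Icc_mem_nhds hx.1 hx.2)).tendsto.comp hy
      have hBs := ((hB.comp hk).mul (hB.comp hm)).mul hBi
      have hHs : Tendsto (fun n : ℕ => fordH α ((n : ℝ) / (n - 1)) ((κ n : ℝ) / n)) atTop
          (nhds (fordH α 1 x)) := by
        have hz := hy.mul (hy.const_sub 1)
        have hz' := hz.rpow_const (p := -1 - α) (Or.inl (mul_pos hx0 h1x).ne')
        exact (hz'.mul (hy.const_sub 1)).mul (((hz.const_mul (1 - 2 * α)).mul ford_ratio).const_add (α / 2))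
      have htot := ((hBs.const_mul (2 / Real.Gamma (1 - α))).mul hHs).mul hfx
      have hlim : 2 / Real.Gamma (1 - α) * (1 * 1 * 1) * fordH α 1 x * f x =
          (1 - x) * f x * ((1 / Real.Gamma (1 - α)) *
            (α * (x * (1 - x)) ^ (-α - 1) + (2 - 4 * α) * (x * (1 - x)) ^ (-α))) := by
        unfold fordH
        have hz : 0 < x * (1 - x) := mul_pos hx0 h1x
        rw [show (x * (1 - x)) ^ (-α) = (x * (1 - x)) ^ (-1 - α) * (x * (1 - x)) by
          rw [← Real.rpow_add_one hz.ne']; congr 1; ring, show -α - 1 = -1 - α by ring]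
        ring
      rw [hlim] at htot
      refine htot.congr' ?_
      have hy' : ∀ᶠ n : ℕ in atTop, (1/2 : ℝ) < (κ n : ℝ) / n := hy.eventually (lt_mem_nhds hx.1)
      filter_upwards [hy', hk.eventually_ge_atTop 1, eventually_ge_atTop 2] with n hn1 hn2 hn
      have hn0 : (0:ℝ) < n := by exact_mod_cast (by omega : 0 < n)
      obtain ⟨i1, -, i3⟩ := ford_idx n hn x hx0 hx.2
      have hlt : n < 2 * κ n := by
        rw [lt_div_iff₀ hn0] at hn1
        have : (n : ℝ) < 2 * κ n := by linarith
        exact_mod_cast this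
      have hmem : (((n + 1) / 2 : ℕ) : ℝ) / n < x := by
        have hpos : 0 < (n : ℝ) * x := by positivity
        rw [div_lt_iff₀ hn0, mul_comm]
        apply Nat.lt_ceil.mp
        have : κ n = ⌈(n : ℝ) * x⌉₊ - 1 := rfl
        omega
      simp only [hF]
      rw [Set.indicator_of_mem (Set.mem_Ioi.mpr hmem)]
      change _ = (n : ℝ) * g n (κ n)
      rw [hform n (κ n) hn2 i3, if_neg (by omega)]
      rfl
  refine key.congr' ?_
  filter_upwards [eventually_ge_atTop 2] with n hn
  rw [Finset.mul_sum]
  exact (ford_sum_eq n hn (g n)).symm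
end

section
/- For n ≥ 3 and integers k with n/2 < k ≤ n−1, let q_n(k,n−k) = [(n−k)^{n−k−1}/(n−k)!]·[k^{k−1}/k!]·[(n−2)!/n^{n−3}], the splitting probabilities of the cut-tree of a uniform Cayley tree with n vertices. Then for every continuous f : [1/2,1] → ℝ, √n·Σ_{n/2<k≤n−1} q_n(k,n−k)·(1−k/n)·f(k/n) → (1/2)·∫_{1/2}^{1} (1−x)·f(x)·√2/(√π·x^{3/2}(1−x)^{3/2}) dx as n → ∞. That is, (q_n^{Cut,Cayley}) satisfies Hypothesis (H) with γ = 1/2 and ν = ν_Br/2. -/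
open MeasureTheory Filter Real Set

/-- The splitting probabilities of the cut-tree of a uniform Cayley tree with `n` vertices:
`q_n(k,n−k) = [(n−k)^{n−k−1}/(n−k)!]·[k^{k−1}/k!]·[(n−2)!/n^{n−3}]` for `n/2 < k ≤ n−1`. -/
noncomputable def cutQ (n k : ℕ) : ℝ :=
  (((n - k : ℕ) : ℝ) ^ (n - k - 1) / (Nat.factorial (n - k) : ℝ)) *
    ((k : ℝ) ^ (k - 1) / (Nat.factorial k : ℝ)) * ((Nat.factorial (n - 2) : ℝ) / (n : ℝ) ^ (n - 3))

lemma aux_A (m : ℕ) (hm : 1 ≤ m) : (m:ℝ)^(m-1) / (m.factorial : ℝ) =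
    Real.exp m / (m * (√2 * √m) * Stirling.stirlingSeq m) := by
  have hm0 : (0:ℝ) < m := by exact_mod_cast hm
  have hp : (m:ℝ)^m = (m:ℝ)^(m-1) * m := by
    rw [← pow_succ]; congr 1; omega
  have hs : √(2 * (m:ℝ)) = √2 * √m := Real.sqrt_mul (by norm_num) _
  have he : Real.exp 1 ^ m = Real.exp m := by rw [← Real.exp_nat_mul]; simp
  unfold Stirling.stirlingSeq
  rw [hs, div_pow, he, hp]
  have : (0:ℝ) < √m := Real.sqrt_pos.2 hm0
  have h2 : (0:ℝ) < √2 := Real.sqrt_pos.2 (by norm_num)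
  have := Real.exp_pos (m:ℝ)
  have : (0:ℝ) < m.factorial := by exact_mod_cast m.factorial_pos
  field_simp

lemma aux_B (n : ℕ) (hn : 3 ≤ n) : ((n-2).factorial : ℝ) / (n:ℝ)^(n-3) =
    n^2/(n-1) * Stirling.stirlingSeq n * (√2 * √n) * (Real.exp n)⁻¹ := by
  obtain ⟨m, rfl⟩ : ∃ m, n = m + 3 := ⟨n - 3, by omega⟩
  have hs : √(2 * ((m+3:ℕ):ℝ)) = √2 * √((m+3:ℕ):ℝ) := Real.sqrt_mul (by norm_num) _
  have he : Real.exp 1 ^ (m+3) = Real.exp ((m+3:ℕ):ℝ) := by rw [← Real.exp_nat_mul]; simp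
  have hf : (m+3).factorial = (m+3) * ((m+2) * (m+1).factorial) := rfl
  unfold Stirling.stirlingSeq
  rw [hs, div_pow, he, hf, show m + 3 - 2 = m + 1 from rfl, show m + 3 - 3 = m from rfl]
  have hm0 : (0:ℝ) < (m+3:ℕ) := by positivity
  have : (0:ℝ) < √(m+3:ℕ) := Real.sqrt_pos.2 hm0
  have h2 : (0:ℝ) < √2 := Real.sqrt_pos.2 (by norm_num)
  have := Real.exp_pos ((m+3:ℕ):ℝ)
  have h1 : ((m+3:ℕ):ℝ) - 1 = m + 2 := by push_cast; ring
  rw [h1]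
  push_cast at *
  field_simp
  ring

/-- normalised term -/
noncomputable def auxT (n k : ℕ) : ℝ :=
  ((n:ℝ)/(n-1) * Stirling.stirlingSeq n) / (Stirling.stirlingSeq (n-k) * Stirling.stirlingSeq k)
    * (1/√2) * (1 / (((k:ℝ)/n) * √((k:ℝ)/n) * √(1 - (k:ℝ)/n)))

lemma aux_pos (m : ℕ) (hm : 1 ≤ m) : √π ≤ Stirling.stirlingSeq m :=
  Stirling.sqrt_pi_le_stirlingSeq (by omega)

lemma aux_T (n k : ℕ) (hn : 3 ≤ n) (hk : 1 ≤ k) (hkn : k < n) :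
    n * (√n * (cutQ n k * (1 - (k:ℝ)/n))) = auxT n k := by
  have hS : ∀ m : ℕ, 1 ≤ m → 0 < Stirling.stirlingSeq m := fun m hm =>
    lt_of_lt_of_le (Real.sqrt_pos.2 Real.pi_pos) (aux_pos m hm)
  unfold cutQ auxT
  rw [aux_B n hn, aux_A k hk, aux_A (n-k) (by omega)]
  have hn0 : (0:ℝ) < n := by positivity
  have hk0 : (0:ℝ) < k := by positivity
  obtain ⟨j, rfl⟩ : ∃ j, n = k + j := ⟨n - k, by omega⟩
  have hj : 1 ≤ j := by omega
  have hj0 : (0:ℝ) < j := by positivity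
  rw [show k + j - k = j by omega]
  have e1 : 1 - (k:ℝ)/((k+j:ℕ):ℝ) = j / ((k+j:ℕ):ℝ) := by
    field_simp; push_cast; ring
  rw [e1, Real.sqrt_div hk0.le, Real.sqrt_div hj0.le]
  have e2 : Real.exp ((k+j:ℕ):ℝ) = Real.exp k * Real.exp j := by
    push_cast; rw [Real.exp_add]
  rw [e2]
  have hn1 : (0:ℝ) < ((k+j:ℕ):ℝ) - 1 := by
    have : (3:ℝ) ≤ ((k+j:ℕ):ℝ) := by exact_mod_cast hn
    linarith
  have a1 := hS _ hk
  have a2 := hS _ hj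
  have a3 := hS (k+j) (by omega)
  generalize Stirling.stirlingSeq k = s1 at *
  generalize Stirling.stirlingSeq j = s2 at *
  generalize Stirling.stirlingSeq (k+j) = s3 at *
  generalize ((k+j:ℕ):ℝ) = N at *
  have b1 := Real.sqrt_pos.2 hn0
  have b2 := Real.sqrt_pos.2 hk0
  have b3 := Real.sqrt_pos.2 hj0
  have b4 : (0:ℝ) < √2 := Real.sqrt_pos.2 (by norm_num)
  have c1 := Real.sq_sqrt hn0.le
  have c3 := Real.sq_sqrt hj0.le
  have c4 : √2 ^ 2 = (2:ℝ) := Real.sq_sqrt (by norm_num)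
  have := Real.exp_pos k
  have := Real.exp_pos j
  field_simp
  try simp only [c1, c3, c4]
  try field_simp

/-- step function -/
noncomputable def auxF (f : ℝ → ℝ) (n k : ℕ) : ℝ :=
  if n < 2 * k then √n * (cutQ n k * (1 - (k : ℝ) / n) * f ((k : ℝ) / n)) else 0

lemma aux_step (g : ℕ → ℝ) (n : ℕ) (hn : 1 ≤ n) :
    ∑ k ∈ Finset.range n, g k = ∫ x in (0:ℝ)..1, n * g ⌊(n:ℝ) * x⌋₊ := by
  have hn0 : (n:ℝ) ≠ 0 := by positivity
  have hc : ∀ k : ℕ, Set.EqOn (fun y : ℝ => g ⌊y⌋₊) (fun _ => g k) (Set.Ioo (k:ℝ) ((k+1:ℕ):ℝ)) := by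
    intro k y hy
    have : ⌊y⌋₊ = k := by
      rw [Nat.floor_eq_iff (le_trans (by positivity) hy.1.le)]
      exact ⟨hy.1.le, by have := hy.2; push_cast at this; exact this⟩
    simp [this]
  have hk : ∀ k : ℕ, (k:ℝ) ≤ ((k+1:ℕ):ℝ) := fun k => by push_cast; linarith
  have h1 : ∫ y in ((0:ℕ):ℝ)..(n:ℝ), g ⌊y⌋₊ = ∑ k ∈ Finset.range n, g k := by
    rw [← intervalIntegral.sum_integral_adjacent_intervals (a := fun k : ℕ => (k:ℝ))]
    · refine Finset.sum_congr rfl fun k _ => ?_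
      rw [intervalIntegral.integral_of_le (hk k), integral_Ioc_eq_integral_Ioo,
        setIntegral_congr_fun measurableSet_Ioo (hc k)]
      simp
    · intro k _
      rw [intervalIntegrable_iff_integrableOn_Ioo_of_le (hk k)]
      exact (integrableOn_congr_fun (hc k) measurableSet_Ioo).2 (by simp)
  rw [intervalIntegral.integral_const_mul,
    intervalIntegral.integral_comp_mul_left (fun y => g ⌊y⌋₊) hn0, ← h1]
  simp [hn0]

lemma aux_bound (n k : ℕ) (B x : ℝ) (hn : 3 ≤ n) (hB : (n:ℝ)/(n-1) * Stirling.stirlingSeq n ≤ B)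
    (hk : n < 2 * k) (hkn : k < n) (hx : (k:ℝ)/n ≤ x) (hx1 : x < 1) :
    |auxT n k| ≤ B * 4 * (1 / √(1-x)) := by
  have hn0 : (0:ℝ) < n := by positivity
  have hn1 : (0:ℝ) < (n:ℝ) - 1 := by
    have : (3:ℝ) ≤ n := by exact_mod_cast hn
    linarith
  have hpi : (1:ℝ) ≤ √π := by
    rw [Real.one_le_sqrt]; linarith [Real.pi_gt_three]
  have s1 := hpi.trans (aux_pos k (by omega))
  have s2 := hpi.trans (aux_pos (n-k) (by omega))
  have s3 := hpi.trans (aux_pos n (by omega))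
  have hP : 0 ≤ (n:ℝ)/(n-1) * Stirling.stirlingSeq n := by positivity
  have hy : (1/2:ℝ) ≤ (k:ℝ)/n := by
    rw [le_div_iff₀ hn0]
    have : (n:ℝ) < 2 * k := by exact_mod_cast hk
    linarith
  have hx0 : 0 < √(1-x) := Real.sqrt_pos.2 (by linarith)
  have hxy : √(1-x) ≤ √(1-(k:ℝ)/n) := Real.sqrt_le_sqrt (by linarith)
  have hq : (1/2:ℝ) ≤ √((k:ℝ)/n) := by
    apply Real.le_sqrt_of_sq_le; linarith
  have h2 : (1:ℝ) ≤ √2 := by rw [Real.one_le_sqrt]; norm_num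
  have hT : 0 ≤ auxT n k := by unfold auxT; positivity
  rw [abs_of_nonneg hT]
  unfold auxT
  have i1 : ((n:ℝ)/(n-1) * Stirling.stirlingSeq n) / (Stirling.stirlingSeq (n-k) * Stirling.stirlingSeq k) ≤ B := by
    refine (div_le_self hP ?_).trans hB
    nlinarith
  have i2 : 1/√2 ≤ 1 := by rw [div_le_one (by linarith)]; exact h2
  have i3 : 1 / (((k:ℝ)/n) * √((k:ℝ)/n) * √(1 - (k:ℝ)/n)) ≤ 4 * (1/√(1-x)) := by
    have : (1/2:ℝ) * (1/2) * √(1-x) ≤ ((k:ℝ)/n) * √((k:ℝ)/n) * √(1 - (k:ℝ)/n) := by gcongr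
    refine (one_div_le_one_div_of_le (by positivity) this).trans (le_of_eq ?_)
    field_simp; norm_num
  have hB0 : 0 ≤ B := hP.trans hB
  calc _ ≤ B * 1 * (4 * (1/√(1-x))) := by gcongr
    _ = _ := by ring

lemma aux_int : IntervalIntegrable (fun x : ℝ => 1/√(1-x)) volume 0 1 := by
  have h := (intervalIntegral.intervalIntegrable_rpow' (a := 0) (b := 1) (r := -(1/2)) (by norm_num))
  have h2 := (h.comp_sub_left 1).symm
  simp only [sub_zero, sub_self] at h2
  refine h2.congr ?_
  intro x hx
  rw [uIoc_of_le zero_le_one] at hx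
  simp only
  rw [Real.rpow_neg (by linarith [hx.2]), ← Real.sqrt_eq_rpow, one_div]

lemma aux_lim_pre : Tendsto (fun n : ℕ => (n:ℝ)/(n-1) * Stirling.stirlingSeq n) atTop (nhds √π) := by
  have h1 : Tendsto (fun n : ℕ => (n:ℝ)/(n-1)) atTop (nhds 1) := by
    have := tendsto_natCast_div_add_atTop (𝕜 := ℝ) (-1)
    simpa [sub_eq_add_neg] using this
  simpa using h1.mul Stirling.tendsto_stirlingSeq_sqrt_pi

lemma aux_lim (f : ℝ → ℝ) (hf : ContinuousOn f (Set.Icc (1/2 : ℝ) 1)) (x : ℝ) (h1 : 1/2 < x) (h2 : x < 1) :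
    Tendsto (fun n : ℕ => n * auxF f n ⌊(n:ℝ) * x⌋₊) atTop
      (nhds (1/√π * (1/√2) * (1/(x * √x * √(1-x))) * f x)) := by
  have hx0 : 0 < x := by linarith
  have hk : Tendsto (fun n : ℕ => ((⌊(n:ℝ) * x⌋₊:ℕ):ℝ) / n) atTop (nhds x) := by
    have := (tendsto_nat_floor_mul_div_atTop (R := ℝ) hx0.le).comp tendsto_natCast_atTop_atTop
    refine this.congr fun n => ?_
    simp [mul_comm]
  have hkk : Tendsto (fun n : ℕ => ⌊(n:ℝ) * x⌋₊) atTop atTop :=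
    tendsto_nat_floor_atTop.comp (tendsto_natCast_atTop_atTop.atTop_mul_const hx0)
  have hj : Tendsto (fun n : ℕ => n - ⌊(n:ℝ) * x⌋₊) atTop atTop := by
    have : Tendsto (fun n : ℕ => ⌊(n:ℝ) * (1-x)⌋₊) atTop atTop :=
      tendsto_nat_floor_atTop.comp (tendsto_natCast_atTop_atTop.atTop_mul_const (by linarith))
    refine tendsto_atTop_mono (fun n => ?_) this
    have a := Nat.floor_le (show 0 ≤ (n:ℝ) * (1-x) from mul_nonneg (by positivity) (by linarith))
    have b := Nat.floor_le (show 0 ≤ (n:ℝ) * x by positivity)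
    have : (⌊(n:ℝ) * (1-x)⌋₊ : ℝ) + ⌊(n:ℝ) * x⌋₊ ≤ n := by linarith
    have : ⌊(n:ℝ) * (1-x)⌋₊ + ⌊(n:ℝ) * x⌋₊ ≤ n := by exact_mod_cast this
    omega
  have hff : Tendsto (fun n : ℕ => f (((⌊(n:ℝ) * x⌋₊:ℕ):ℝ) / n)) atTop (nhds (f x)) :=
    (hf.continuousAt (Icc_mem_nhds h1 h2)).tendsto.comp hk
  have hpi := Real.sqrt_pos.2 Real.pi_pos
  have hS := Stirling.tendsto_stirlingSeq_sqrt_pi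
  have hT : Tendsto (fun n : ℕ => auxT n ⌊(n:ℝ) * x⌋₊) atTop
      (nhds (√π / (√π * √π) * (1/√2) * (1/(x * √x * √(1-x))))) := by
    unfold auxT
    refine Tendsto.mul (Tendsto.mul ?_ tendsto_const_nhds) ?_
    · exact aux_lim_pre.div ((hS.comp hj).mul (hS.comp hkk)) (by positivity)
    · refine tendsto_const_nhds.div ((hk.mul ?_).mul ?_) ?_
      · exact hk.sqrt
      · exact (hk.const_sub 1).sqrt
      · have := Real.sqrt_pos.2 (show 0 < 1 - x by linarith)
        positivity
  have he : 1/√π = √π / (√π * √π) := by field_simp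
  rw [he]
  refine (hT.mul hff).congr' ?_
  filter_upwards [hk.eventually_const_lt h1, hk.eventually_lt_const h2, eventually_ge_atTop 3,
    hkk.eventually_ge_atTop 1] with n a b c d
  have hn0 : (0:ℝ) < n := by positivity
  rw [div_lt_one hn0] at b
  rw [lt_div_iff₀ hn0] at a
  have a' : n < 2 * ⌊(n:ℝ) * x⌋₊ := by
    have : (n:ℝ) < 2 * ⌊(n:ℝ) * x⌋₊ := by linarith
    exact_mod_cast this
  rw [← aux_T n _ c d (by exact_mod_cast b), auxF, if_pos a']
  ring

/-- the splitting probabilities of the cut-tree of a uniform Cayley tree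
satisfy Hypothesis (H) with `γ = 1/2` and `ν = ν_Br/2`: for every continuous
`f : [1/2,1] → ℝ`, `√n · Σ_{n/2<k≤n−1} q_n(k,n−k)(1−k/n) f(k/n)` converges to
`(1/2)·∫_{1/2}^{1} (1−x) f(x) √2/(√π x^{3/2}(1−x)^{3/2}) dx`. -/
theorem stmt13 :
    ∀ f : ℝ → ℝ, ContinuousOn f (Set.Icc (1/2 : ℝ) 1) →
      Tendsto (fun n : ℕ => Real.sqrt n *
          ∑ k ∈ (Finset.range n).filter (fun k => n < 2 * k),
            cutQ n k * (1 - (k : ℝ) / n) * f ((k : ℝ) / n))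
        atTop
        (nhds ((1/2) * ∫ x in Set.Icc (1/2 : ℝ) 1,
          (1 - x) * f x * (Real.sqrt 2 / (Real.sqrt π * x ^ ((3:ℝ)/2) * (1 - x) ^ ((3:ℝ)/2))))) := by
  intro f hf
  obtain ⟨M, hM⟩ := isCompact_Icc.exists_bound_of_continuousOn hf
  set G : ℝ → ℝ := fun x => 1/√π * (1/√2) * (1/(x * √x * √(1-x))) * f x with hG
  have hlimit : (1/2) * ∫ x in Set.Icc (1/2 : ℝ) 1,
          (1 - x) * f x * (Real.sqrt 2 / (Real.sqrt π * x ^ ((3:ℝ)/2) * (1 - x) ^ ((3:ℝ)/2)))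
      = ∫ x in (0:ℝ)..1, (Set.Ioo (1/2:ℝ) 1).indicator G x := by
    rw [intervalIntegral.integral_of_le zero_le_one, setIntegral_indicator measurableSet_Ioo,
      show Set.Ioc (0:ℝ) 1 ∩ Set.Ioo (1/2) 1 = Set.Ioo (1/2) 1 from
        Set.inter_eq_right.2 fun x hx => ⟨by linarith [hx.1], hx.2.le⟩,
      integral_Icc_eq_integral_Ioo, ← integral_const_mul]
    refine setIntegral_congr_fun measurableSet_Ioo fun x hx => ?_
    have hx0 : 0 < x := by linarith [hx.1]
    have hx1 : 0 < 1 - x := by linarith [hx.2]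
    have hr : ∀ y : ℝ, 0 < y → y ^ ((3:ℝ)/2) = y * √y := by
      intro y hy
      rw [Real.sqrt_eq_rpow, show (3:ℝ)/2 = 1 + 1/2 by norm_num, Real.rpow_add hy, Real.rpow_one]
    simp only [hG]
    rw [hr x hx0, hr _ hx1]
    have b1 := Real.sqrt_pos.2 hx0
    have b2 := Real.sqrt_pos.2 hx1
    have b3 := Real.sqrt_pos.2 Real.pi_pos
    have b4 : (0:ℝ) < √2 := Real.sqrt_pos.2 (by norm_num)
    have c4 : √2 ^ 2 = (2:ℝ) := Real.sq_sqrt (by norm_num)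
    field_simp
    rw [c4]; ring
  rw [hlimit]
  have hsum : ∀ᶠ n : ℕ in atTop, ∫ x in (0:ℝ)..1, n * auxF f n ⌊(n:ℝ) * x⌋₊ = Real.sqrt n *
          ∑ k ∈ (Finset.range n).filter (fun k => n < 2 * k),
            cutQ n k * (1 - (k : ℝ) / n) * f ((k : ℝ) / n) := by
    filter_upwards [eventually_ge_atTop 1] with n hn
    rw [← aux_step _ n hn, Finset.mul_sum, Finset.sum_filter]
    rfl
  refine Tendsto.congr' hsum ?_
  refine intervalIntegral.tendsto_integral_filter_of_dominated_convergence
    (fun x => (√π + 1) * 4 * (1/√(1-x)) * M) ?_ ?_ ?_ ?_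
  · refine Eventually.of_forall fun n => Measurable.aestronglyMeasurable ?_
    refine measurable_const.mul ?_
    exact (measurable_from_nat (f := auxF f n)).comp (Nat.measurable_floor.comp (measurable_const_mul _))
  · filter_upwards [aux_lim_pre.eventually_le_const (show √π < √π + 1 by linarith),
      eventually_ge_atTop 3] with n hB hn
    have hne : ∀ᵐ x : ℝ, x ≠ 1 := Measure.ae_ne volume 1
    filter_upwards [hne] with x hx1 hx
    rw [uIoc_of_le zero_le_one] at hx
    have hx1 : x < 1 := lt_of_le_of_ne hx.2 hx1
    have hM0 : 0 ≤ M := (norm_nonneg _).trans (hM 1 (by norm_num))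
    have hn0 : (0:ℝ) < n := by positivity
    unfold auxF
    split_ifs with h
    · have hle := Nat.floor_le (show 0 ≤ (n:ℝ) * x from mul_nonneg hn0.le hx.1.le)
      have hkn : ⌊(n:ℝ) * x⌋₊ < n := by
        have : ((⌊(n:ℝ) * x⌋₊:ℕ):ℝ) < n := by nlinarith
        exact_mod_cast this
      have hkx : ((⌊(n:ℝ) * x⌋₊:ℕ):ℝ) / n ≤ x := by
        rw [div_le_iff₀ hn0]; linarith
      have hy : (1/2:ℝ) ≤ ((⌊(n:ℝ) * x⌋₊:ℕ):ℝ)/n := by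
        rw [le_div_iff₀ hn0]
        have : (n:ℝ) < 2 * ((⌊(n:ℝ) * x⌋₊:ℕ):ℝ) := by exact_mod_cast h
        linarith
      have e := aux_T n _ hn (by omega) hkn
      have := aux_bound n _ _ x hn hB h hkn hkx hx1
      have e2 : ∀ a b c d e : ℝ, a * (b * (c * d * e)) = (a * (b * (c * d))) * e := by intros; ring
      rw [e2, e, norm_mul, Real.norm_eq_abs]
      gcongr
      exact hM _ ⟨hy, by linarith⟩
    · simp only [mul_zero, norm_zero]
      positivity
  · exact (aux_int.const_mul _).mul_const _
  · have hne : ∀ᵐ x : ℝ, x ≠ 1 := Measure.ae_ne volume 1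
    have hne2 : ∀ᵐ x : ℝ, x ≠ 1/2 := Measure.ae_ne volume (1/2)
    filter_upwards [hne, hne2] with x hx1 hx2 hx
    rw [uIoc_of_le zero_le_one] at hx
    have hx1 : x < 1 := lt_of_le_of_ne hx.2 hx1
    rcases lt_or_gt_of_ne hx2 with h | h
    · rw [Set.indicator_of_notMem (fun hh => by linarith [hh.1])]
      refine tendsto_const_nhds.congr fun n => ?_
      have hle := Nat.floor_le (show 0 ≤ (n:ℝ) * x from mul_nonneg (by positivity) hx.1.le)
      have : ¬ (n < 2 * ⌊(n:ℝ) * x⌋₊) := by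
        intro hh
        have : (n:ℝ) < 2 * ((⌊(n:ℝ) * x⌋₊:ℕ):ℝ) := by exact_mod_cast hh
        have : (0:ℝ) ≤ n := by positivity
        nlinarith
      simp [auxF, this]
    · rw [Set.indicator_of_mem (show x ∈ Set.Ioo (1/2:ℝ) 1 from ⟨h, hx1⟩)]
      exact aux_lim f hf x h hx1
end

section
/- Let (p(n,·)) satisfy Hypothesis (H') with parameters (γ,μ). Then for every ε ∈ (0,1) such that μ({1−ε}) = 0, n^γ·Σ_{k=0}^{⌊(1−ε)n⌋} p(n,k) → ∫_{[0,1−ε]} (1−x)^{−1} μ(dx) as n → ∞, and this limit c_ε = ∫_{[0,1−ε]}(1−x)^{−1}μ(dx) is finite. In other words, under (H'), starting from n the probability that the chain makes a one-step jump below (1−ε)n is asymptotically c_ε·n^{−γ}. -/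
open MeasureTheory Filter Real Set

/-- Hypothesis (H') for a family `p(n,·)` of probability measures on `{0,…,n}`, with
parameters `γ > 0` and a nonzero finite measure `μ` on `[0,1]` (a measure on `ℝ` supported
on `[0,1]`): for every continuous `f : [0,1] → ℝ`,
`n^γ Σ_{k=0}^{n} p(n,k)(1−k/n) f(k/n) → ∫_{[0,1]} f dμ`. -/
def HypHprime (p : ℕ → ℕ → ℝ) (γ : ℝ) (μ : Measure ℝ) : Prop :=
  ∀ f : ℝ → ℝ, ContinuousOn f (Set.Icc 0 1) →
    Tendsto (fun n : ℕ => (n : ℝ) ^ γ * ∑ k ∈ Finset.range (n + 1),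
        p n k * (1 - (k : ℝ) / n) * f ((k : ℝ) / n))
      atTop (nhds (∫ x in Set.Icc (0:ℝ) 1, f x ∂μ))

theorem aux_sum_eq (p : ℕ → ℕ → ℝ) (a : ℝ) (ha0 : 0 < a) (ha1 : a < 1) (n : ℕ) (hn : 1 ≤ n) :
    ∑ k ∈ Finset.range (⌊a * (n : ℝ)⌋₊ + 1), p n k =
      ∑ k ∈ Finset.range (n + 1), (if (k : ℝ) / n ≤ a then p n k else 0) := by
  have hn' : (0 : ℝ) < n := by exact_mod_cast hn
  rw [← Finset.sum_filter]
  apply Finset.sum_congr _ (fun _ _ => rfl)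
  ext k
  simp only [Finset.mem_range, Finset.mem_filter, Nat.lt_succ_iff]
  rw [Nat.le_floor_iff (by positivity), div_le_iff₀ hn']
  constructor
  · intro h
    refine ⟨?_, h⟩
    have : (k : ℝ) ≤ n := by nlinarith
    exact_mod_cast this
  · exact fun h => h.2

/-- The cutoff functions tend pointwise to an indicator, hence their integrals converge. -/
theorem aux_dct (μ : Measure ℝ) [IsFiniteMeasure μ] (a ε : ℝ) (hε0 : 0 < ε)
    (u : ℕ → ℝ → ℝ) (hu : ∀ m, Continuous (u m)) (hb : ∀ m x, |u m x| ≤ 1) (g : ℝ → ℝ)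
    (hlim : ∀ x, x ≠ a → Tendsto (fun m => u m x) atTop (nhds (g x))) (hatom : μ {a} = 0) :
    Tendsto (fun m => ∫ x in Set.Icc (0:ℝ) 1, u m x * (max (1 - x) ε)⁻¹ ∂μ) atTop
      (nhds (∫ x in Set.Icc (0:ℝ) 1, g x * (max (1 - x) ε)⁻¹ ∂μ)) := by
  have hpos : ∀ x : ℝ, 0 < max (1 - x) ε := fun x => lt_max_of_lt_right hε0
  have hc : Continuous (fun x : ℝ => (max (1 - x) ε)⁻¹) :=
    Continuous.inv₀ (by fun_prop) (fun x => (hpos x).ne')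
  refine tendsto_integral_of_dominated_convergence (fun _ => ε⁻¹) ?_ ?_ ?_ ?_
  · intro m
    exact ((hu m).mul hc).aestronglyMeasurable
  · exact integrable_const _
  · intro m
    refine Eventually.of_forall fun x => ?_
    rw [norm_mul, Real.norm_eq_abs, Real.norm_eq_abs, abs_of_pos (inv_pos.2 (hpos x))]
    have h1 : (max (1 - x) ε)⁻¹ ≤ ε⁻¹ := inv_anti₀ hε0 (le_max_right _ _)
    have h2 := inv_pos.2 (hpos x)
    nlinarith [hb m x]
  · have : ∀ᵐ x ∂μ, x ≠ a := by
      rw [ae_iff]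
      simpa using hatom
    filter_upwards [ae_restrict_of_ae this] with x hx
    exact (hlim x hx).mul_const _

/-- under Hypothesis (H') with parameters `(γ,μ)`, for every `ε ∈ (0,1)` with
`μ({1−ε}) = 0`, the function `x ↦ (1−x)⁻¹` is `μ`-integrable on `[0,1−ε]` and
`n^γ · Σ_{k=0}^{⌊(1−ε)n⌋} p(n,k) → ∫_{[0,1−ε]} (1−x)⁻¹ μ(dx) = c_ε < ∞`:
the probability of a one-step jump from `n` below `(1−ε)n` is asymptotically `c_ε·n^{−γ}`. -/
theorem stmt16 (p : ℕ → ℕ → ℝ) (γ : ℝ) (hγ : 0 < γ)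
    (μ : Measure ℝ) [IsFiniteMeasure μ] (hμ0 : μ ≠ 0) (hsupp : μ (Set.Icc (0:ℝ) 1)ᶜ = 0)
    (hp0 : ∀ n k : ℕ, k ≤ n → 0 ≤ p n k)
    (hp1 : ∀ n : ℕ, 1 ≤ n → ∑ k ∈ Finset.range (n + 1), p n k = 1)
    (hH : HypHprime p γ μ)
    (ε : ℝ) (hε0 : 0 < ε) (hε1 : ε < 1) (hatom : μ {1 - ε} = 0) :
    IntegrableOn (fun x => (1 - x)⁻¹) (Set.Icc 0 (1 - ε)) μ ∧
    Tendsto (fun n : ℕ => (n : ℝ) ^ γ * ∑ k ∈ Finset.range (⌊(1 - ε) * (n : ℝ)⌋₊ + 1), p n k)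
      atTop (nhds (∫ x in Set.Icc (0:ℝ) (1 - ε), (1 - x)⁻¹ ∂μ)) := by
  obtain ⟨a, ha⟩ : ∃ a, a = 1 - ε := ⟨_, rfl⟩
  rw [← ha] at hatom ⊢
  have ha0 : 0 < a := by linarith
  have ha1 : a < 1 := by linarith
  have hpos : ∀ x : ℝ, 0 < max (1 - x) ε := fun x => lt_max_of_lt_right hε0
  have hc : Continuous (fun x : ℝ => (max (1 - x) ε)⁻¹) :=
    Continuous.inv₀ (by fun_prop) (fun x => (hpos x).ne')
  refine ⟨?_, ?_⟩
  · apply ContinuousOn.integrableOn_compact isCompact_Icc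
    apply ContinuousOn.inv₀ (by fun_prop)
    intro x hx
    have := hx.2
    linarith
  have hI : ∫ x in Set.Icc (0:ℝ) a, (1 - x)⁻¹ ∂μ =
      ∫ x in Set.Icc (0:ℝ) 1, (Set.Iic a).indicator (fun _ => (1:ℝ)) x * (max (1 - x) ε)⁻¹ ∂μ := by
    have h1 : ∀ x, (Set.Iic a).indicator (fun _ => (1:ℝ)) x * (max (1 - x) ε)⁻¹ =
        (Set.Iic a).indicator (fun x => (1 - x)⁻¹) x := by
      intro x
      by_cases hx : x ∈ Set.Iic a
      · have hx' : x ≤ a := hx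
        rw [indicator_of_mem hx, indicator_of_mem hx, one_mul, max_eq_left (by linarith)]
      · rw [indicator_of_notMem hx, indicator_of_notMem hx, zero_mul]
    simp_rw [h1]
    rw [setIntegral_indicator measurableSet_Iic]
    congr 2
    ext x
    simp only [Set.mem_Icc, Set.mem_inter_iff, Set.mem_Iic]
    constructor
    · rintro ⟨h, h'⟩
      exact ⟨⟨h, by linarith⟩, h'⟩
    · rintro ⟨⟨h, _⟩, h'⟩
      exact ⟨h, h'⟩
  rw [hI]
  let u : ℕ → ℝ → ℝ := fun m x => max 0 (min 1 (1 - m * (x - a)))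
  let l : ℕ → ℝ → ℝ := fun m x => max 0 (min 1 (m * (a - x)))
  have hbig : ∀ c : ℝ, 0 < c → ∀ᶠ m : ℕ in atTop, 1 ≤ (m : ℝ) * c := fun c hc' =>
    (tendsto_natCast_atTop_atTop.atTop_mul_const hc').eventually_ge_atTop 1
  have hU := aux_dct μ a ε hε0 u (fun m => by fun_prop)
    (fun m x => by
      rw [abs_of_nonneg (le_max_left _ _)]
      exact max_le zero_le_one (min_le_left _ _))
    ((Set.Iic a).indicator (fun _ => (1:ℝ)))
    (fun x hx => by
      rcases lt_or_gt_of_ne hx with h | h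
      · rw [indicator_of_mem (show x ∈ Set.Iic a from h.le)]
        refine tendsto_const_nhds.congr fun m => ?_
        have : (m : ℝ) * (x - a) ≤ 0 := mul_nonpos_of_nonneg_of_nonpos (by positivity) (by linarith)
        simp only [u]
        rw [min_eq_left (by linarith), max_eq_right zero_le_one]
      · rw [indicator_of_notMem (show x ∉ Set.Iic a from not_le.2 h)]
        refine tendsto_const_nhds.congr' ?_
        filter_upwards [hbig (x - a) (by linarith)] with m hm
        simp only [u]
        rw [max_eq_left ((min_le_right _ _).trans (by linarith))]) hatom
  have hL := aux_dct μ a ε hε0 l (fun m => by fun_prop)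
    (fun m x => by
      rw [abs_of_nonneg (le_max_left _ _)]
      exact max_le zero_le_one (min_le_left _ _))
    ((Set.Iic a).indicator (fun _ => (1:ℝ)))
    (fun x hx => by
      rcases lt_or_gt_of_ne hx with h | h
      · rw [indicator_of_mem (show x ∈ Set.Iic a from h.le)]
        refine tendsto_const_nhds.congr' ?_
        filter_upwards [hbig (a - x) (by linarith)] with m hm
        simp only [l]
        rw [min_eq_left hm, max_eq_right zero_le_one]
      · rw [indicator_of_notMem (show x ∉ Set.Iic a from not_le.2 h)]
        refine tendsto_const_nhds.congr fun m => ?_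
        have : (m : ℝ) * (a - x) ≤ 0 := mul_nonpos_of_nonneg_of_nonpos (by positivity) (by linarith)
        simp only [l]
        rw [max_eq_left ((min_le_right _ _).trans this)]) hatom
  have hx01 : ∀ n k : ℕ, 1 ≤ n → k ∈ Finset.range (n + 1) → (k : ℝ) / n ≤ 1 := by
    intro n k hn hk
    have hk' : k ≤ n := Nat.lt_succ_iff.1 (Finset.mem_range.1 hk)
    exact div_le_one_of_le₀ (by exact_mod_cast hk') (by positivity)
  have hone : ∀ x : ℝ, x ≤ a → (1 - x) * (max (1 - x) ε)⁻¹ = 1 := by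
    intro x hx
    rw [max_eq_left (by linarith), mul_inv_cancel₀ (by linarith)]
  rw [tendsto_order]
  constructor
  · intro c hcI
    obtain ⟨m, hm⟩ := (hL.eventually_const_lt hcI).exists
    have hT := hH (fun x => l m x * (max (1 - x) ε)⁻¹)
      (((by fun_prop : Continuous (l m))).mul hc).continuousOn
    filter_upwards [hT.eventually_const_lt hm, eventually_ge_atTop 1] with n h1 hn
    refine h1.trans_le ?_
    rw [aux_sum_eq p a ha0 ha1 n hn]
    apply mul_le_mul_of_nonneg_left _ (by positivity)
    apply Finset.sum_le_sum
    intro k hk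
    have hpk := hp0 n k (Nat.lt_succ_iff.1 (Finset.mem_range.1 hk))
    generalize (k : ℝ) / n = x at *
    split_ifs with hxa
    · have h2 : l m x ≤ 1 := max_le zero_le_one (min_le_left _ _)
      calc p n k * (1 - x) * (l m x * (max (1 - x) ε)⁻¹)
          = p n k * l m x * ((1 - x) * (max (1 - x) ε)⁻¹) := by ring
        _ = p n k * l m x := by rw [hone x hxa, mul_one]
        _ ≤ p n k := mul_le_of_le_one_right hpk h2
    · have h2 : l m x = 0 := by
        have : (m : ℝ) * (a - x) ≤ 0 := mul_nonpos_of_nonneg_of_nonpos (by positivity) (by linarith)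
        simp only [l]
        rw [max_eq_left ((min_le_right _ _).trans this)]
      simp [h2]
  · intro c hcI
    obtain ⟨m, hm⟩ := (hU.eventually_lt_const hcI).exists
    have hT := hH (fun x => u m x * (max (1 - x) ε)⁻¹)
      (((by fun_prop : Continuous (u m))).mul hc).continuousOn
    filter_upwards [hT.eventually_lt_const hm, eventually_ge_atTop 1] with n h1 hn
    refine lt_of_le_of_lt ?_ h1
    rw [aux_sum_eq p a ha0 ha1 n hn]
    apply mul_le_mul_of_nonneg_left _ (by positivity)
    apply Finset.sum_le_sum
    intro k hk
    have hpk := hp0 n k (Nat.lt_succ_iff.1 (Finset.mem_range.1 hk))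
    have hx1 := hx01 n k hn hk
    generalize (k : ℝ) / n = x at *
    split_ifs with hxa
    · have h2 : u m x = 1 := by
        have : (m : ℝ) * (x - a) ≤ 0 := mul_nonpos_of_nonneg_of_nonpos (by positivity) (by linarith)
        simp only [u]
        rw [min_eq_left (by linarith), max_eq_right zero_le_one]
      rw [h2, one_mul, mul_assoc, hone x hxa, mul_one]
    · have h2 : 0 ≤ u m x := le_max_left _ _
      have h3 := (inv_pos.2 (hpos x)).le
      have h4 : 0 ≤ 1 - x := by linarith
      exact mul_nonneg (mul_nonneg hpk h4) (mul_nonneg h2 h3)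
end
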